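/- arXiv:2107.11438 — 3 statements merged into one kernel-verified Lean document; each statement's English description precedes it below -/
import Mathlib

section
/- Let n ≥ 1, k ≥ 3, let v_1, …, v_n be an orthonormal basis of the Euclidean space ℝⁿ, let λ_1, …, λ_n ∈ ℝ, and let α_1, …, α_n ∈ ℝ. Define x : ℝ → ℝⁿ by x(t) = ∑_{r=1}^n α_r·(1 − (k−2)·λ_r·α_r^{k−2}·t)^{−1/(k−2)}·v_r. Then x(0) = ∑_{r=1}^n α_r·v_r, and for every t ∈ ℝ such that 1 − (k−2)·λ_r·α_r^{k−2}·t > 0 for all r, the function x is differentiable at t with derivative x′(t) = ∑_{r=1}^n λ_r·⟨v_r, x(t)⟩^{k−1}·v_r. -/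
/-- The scalar Bernoulli equation `ẏ = l * y ^ (m + 1)` is solved by
`y t = a * (1 - m * l * a ^ m * t) ^ (-1 / m)` wherever the base is positive. -/
theorem hasDerivAt_bernoulli_solution {m : ℕ} (hm : m ≠ 0) (l a t : ℝ)
    (ht : 0 < 1 - (m : ℝ) * l * a ^ m * t) :
    HasDerivAt (fun s : ℝ => a * (1 - (m : ℝ) * l * a ^ m * s) ^ (-1 / (m : ℝ)))
      (l * (a * (1 - (m : ℝ) * l * a ^ m * t) ^ (-1 / (m : ℝ))) ^ (m + 1)) t := by
  have hm' : (m : ℝ) ≠ 0 := Nat.cast_ne_zero.mpr hm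
  have hbase : HasDerivAt (fun s : ℝ => 1 - (m : ℝ) * l * a ^ m * s)
      (-((m : ℝ) * l * a ^ m)) t := by
    simpa using ((hasDerivAt_id t).const_mul ((m : ℝ) * l * a ^ m)).const_sub 1
  have hpow : ((1 - (m : ℝ) * l * a ^ m * t) ^ (-1 / (m : ℝ))) ^ (m + 1) =
      (1 - (m : ℝ) * l * a ^ m * t) ^ (-1 / (m : ℝ) - 1) := by
    rw [← Real.rpow_mul_natCast ht.le]
    congr 1
    push_cast
    field_simp
    ring
  refine ((hbase.rpow_const (p := -1 / (m : ℝ)) (Or.inl ht.ne')).const_mul a).congr_deriv ?_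
  rw [mul_pow, hpow]
  field_simp
  ring

/-- Proposition 1: the explicit solution of the odeco HPDS `ẋ = ∑ r, λ_r ⟨v_r, x⟩^{k-1} v_r`. -/
theorem stmt_1 (n k : ℕ) (hn : 1 ≤ n) (hk : 3 ≤ k)
    (v : OrthonormalBasis (Fin n) ℝ (EuclideanSpace ℝ (Fin n)))
    (lam α : Fin n → ℝ)
    (x : ℝ → EuclideanSpace ℝ (Fin n))
    (hx : ∀ t : ℝ, x t = ∑ r : Fin n,
      (α r * (1 - ((k : ℝ) - 2) * lam r * α r ^ (k - 2) * t) ^ (-1 / ((k : ℝ) - 2))) • v r) :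
    x 0 = ∑ r : Fin n, α r • v r ∧
    ∀ t : ℝ, (∀ r : Fin n, 0 < 1 - ((k : ℝ) - 2) * lam r * α r ^ (k - 2) * t) →
      HasDerivAt x (∑ r : Fin n, (lam r * (inner ℝ (v r) (x t) : ℝ) ^ (k - 1)) • v r) t := by
  obtain ⟨m, rfl⟩ : ∃ m, k = m + 2 := ⟨k - 2, by omega⟩
  have hcast : ((m + 2 : ℕ) : ℝ) - 2 = m := by push_cast; ring
  simp only [hcast, Nat.add_sub_cancel] at hx ⊢
  refine ⟨by simp [hx], fun t ht => ?_⟩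
  have hinner (r : Fin n) : (inner ℝ (v r) (x t) : ℝ) =
      α r * (1 - (m : ℝ) * lam r * α r ^ m * t) ^ (-1 / (m : ℝ)) := by
    rw [hx, v.orthonormal.inner_right_fintype]
  simp only [hinner]
  rw [funext hx]
  exact HasDerivAt.fun_sum fun r _ =>
    (hasDerivAt_bernoulli_solution (by omega) (lam r) (α r) t (ht r)).smul_const (v r)
end

section
/- Let n ≥ 1 and k ≥ 2. Let v_1, …, v_n and w_1, …, w_n be vectors in ℝⁿ, and define F : ℝⁿ → ℝⁿ by F(x) = ∑_{r=1}^n ⟨v_r, x⟩^{k−1}·w_r (a HPDS whose dynamic tensor has CP decomposition ∑_r v_r ∘ ⋯ ∘ v_r ∘ w_r with R = n). Suppose P is an invertible n × n real matrix and λ_1, …, λ_n are nonzero reals such that (1) Pᵀ v_r = λ_r^{−1}·P^{−1} w_r for every r, and (2) the family u_r := Pᵀ v_r, r = 1, …, n, is orthonormal in the Euclidean space ℝⁿ. Then for every y ∈ ℝⁿ, P^{−1}·F(P·y) = ∑_{r=1}^n λ_r·⟨u_r, y⟩^{k−1}·u_r; that is, under the change of variables x = P y the HPDS ẋ = F(x)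 becomes the odeco HPDS ẏ = ∑_r λ_r ⟨u_r, y⟩^{k−1} u_r. -/
open Matrix

/-- Proposition 6: if `Pᵀ v_r = λ_r⁻¹ P⁻¹ w_r` for all `r` and the family `u_r = Pᵀ v_r` is
orthonormal, then the change of variables `x = P y` transforms the HPDS
`ẋ = ∑ r, ⟨v_r, x⟩^{k-1} w_r` into the odeco HPDS `ẏ = ∑ r, λ_r ⟨u_r, y⟩^{k-1} u_r`. -/
theorem stmt_16 (n k : ℕ) (hn : 1 ≤ n) (hk : 2 ≤ k)
    (v w : Fin n → EuclideanSpace ℝ (Fin n))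
    (F : EuclideanSpace ℝ (Fin n) → EuclideanSpace ℝ (Fin n))
    (hF : ∀ x : EuclideanSpace ℝ (Fin n),
      F x = ∑ r : Fin n, ((inner ℝ (v r) x : ℝ) ^ (k - 1)) • w r)
    (P : Matrix (Fin n) (Fin n) ℝ) (hP : IsUnit P)
    (lam : Fin n → ℝ) (hlam : ∀ r, lam r ≠ 0)
    (u : Fin n → EuclideanSpace ℝ (Fin n))
    (hu : ∀ r : Fin n, u r = Pᵀ *ᵥ (v r))
    (h1 : ∀ r : Fin n, (Pᵀ *ᵥ (v r) : Fin n → ℝ) = (lam r)⁻¹ • (P⁻¹ *ᵥ (w r)))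
    (h2 : Orthonormal ℝ u) :
    ∀ y : EuclideanSpace ℝ (Fin n),
      (WithLp.toLp 2 (P⁻¹ *ᵥ (F (WithLp.toLp 2 (P *ᵥ y)))) : EuclideanSpace ℝ (Fin n)) =
        ∑ r : Fin n, (lam r * (inner ℝ (u r) y : ℝ) ^ (k - 1)) • u r := by
  intro y
  have inner_eq (r : Fin n) :
      (inner ℝ (v r) (WithLp.toLp 2 (P *ᵥ y)) : ℝ) = inner ℝ (u r) y := by
    simp only [EuclideanSpace.inner_eq_star_dotProduct, star_trivial, hu]
    rw [dotProduct_comm, dotProduct_mulVec, ← mulVec_transpose, dotProduct_comm]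
  have inv_mulVec (r : Fin n) : P⁻¹ *ᵥ (w r) = lam r • (u r).ofLp := by
    rw [hu, h1, smul_inv_smul₀ (hlam r)]
  apply WithLp.ofLp_injective 2
  simp only [hF, inner_eq, WithLp.ofLp_sum, WithLp.ofLp_smul, mulVec_sum, mulVec_smul,
    inv_mulVec, smul_smul, mul_comm]
end

section
/- Let n ≥ 1 and k ≥ 2. Let v_1, …, v_n be vectors in ℝⁿ such that the matrix V with columns v_1, …, v_n is invertible, let w_1, …, w_n ∈ ℝⁿ, and define F : ℝⁿ → ℝⁿ by F(x) = ∑_{r=1}^n ⟨v_r, x⟩^{k−1}·w_r. Suppose there exist nonzero reals λ_1, …, λ_n such that for every r, the r-th column of (V^{−1})ᵀ equals λ_r^{−1}·w_r. Then there exist an invertible n × n real matrix P and an orthonormal family u_1, …, u_n in ℝⁿ such that for every y ∈ ℝⁿ, P^{−1}·F(P·y) = ∑_{r=1}^n λ_r·⟨u_r, y⟩^{k−1}·u_r; that is, the HPDS ẋ = F(x) can be transformed by a linear change of variables to an odeco HPDS. -/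
open Matrix

/-- Corollary 3: if the columns of `W = (V⁻¹)ᵀ` satisfy `w_r = λ_r⁻¹ · (column r of W)`, i.e.
the `r`-th column of `(V⁻¹)ᵀ` equals `λ_r⁻¹ w_r`, then the HPDS `ẋ = ∑ r, ⟨v_r, x⟩^{k-1} w_r`
can be transformed by an invertible linear change of variables to an odeco HPDS. -/
theorem stmt_17 (n k : ℕ) (hn : 1 ≤ n) (hk : 2 ≤ k)
    (v w : Fin n → EuclideanSpace ℝ (Fin n))
    (V : Matrix (Fin n) (Fin n) ℝ) (hV : ∀ j r : Fin n, V j r = v r j)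
    (hVunit : IsUnit V)
    (F : EuclideanSpace ℝ (Fin n) → EuclideanSpace ℝ (Fin n))
    (hF : ∀ x : EuclideanSpace ℝ (Fin n),
      F x = ∑ r : Fin n, ((inner ℝ (v r) x : ℝ) ^ (k - 1)) • w r)
    (lam : Fin n → ℝ) (hlam : ∀ r, lam r ≠ 0)
    (hW : ∀ r j : Fin n, (V⁻¹)ᵀ j r = (lam r)⁻¹ * w r j) :
    ∃ P : Matrix (Fin n) (Fin n) ℝ, IsUnit P ∧
      ∃ u : Fin n → EuclideanSpace ℝ (Fin n), Orthonormal ℝ u ∧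
        ∀ y : EuclideanSpace ℝ (Fin n),
          (WithLp.toLp 2 (P⁻¹ *ᵥ (F (WithLp.toLp 2 (P *ᵥ y)))) : EuclideanSpace ℝ (Fin n)) =
            ∑ r : Fin n, (lam r * (inner ℝ (u r) y : ℝ) ^ (k - 1)) • u r := by
  have hdet : IsUnit V.det := (Matrix.isUnit_iff_isUnit_det V).mp hVunit
  have hVW : Vᵀ * (V⁻¹)ᵀ = 1 := by
    rw [← Matrix.transpose_mul, Matrix.nonsing_inv_mul V hdet, Matrix.transpose_one]
  have hWinv : ((V⁻¹)ᵀ)⁻¹ = Vᵀ := Matrix.inv_eq_left_inv hVW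
  have hinner : ∀ (r : Fin n) (x : EuclideanSpace ℝ (Fin n)),
      (inner ℝ (v r) x : ℝ) = (Vᵀ *ᵥ x.ofLp) r := by
    intro r x
    simp [PiLp.inner_apply, Matrix.mulVec, dotProduct, hV, mul_comm]
  have hw : ∀ r, (w r).ofLp = lam r • ((V⁻¹)ᵀ *ᵥ Pi.single r 1) := by
    intro r
    ext j
    rw [Matrix.mulVec_single_one, Pi.smul_apply, Matrix.col_apply, hW r j, smul_eq_mul,
      mul_inv_cancel_left₀ (hlam r)]
  refine ⟨(V⁻¹)ᵀ, IsUnit.of_mul_eq_one_right _ hVW,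
    EuclideanSpace.basisFun (Fin n) ℝ, (EuclideanSpace.basisFun (Fin n) ℝ).orthonormal, ?_⟩
  intro y
  have hpow : ∀ r, (inner ℝ (v r) (WithLp.toLp 2 ((V⁻¹)ᵀ *ᵥ y.ofLp)) : ℝ) = y r := by
    intro r
    rw [hinner, Matrix.mulVec_mulVec, hVW, Matrix.one_mulVec]
  rw [hWinv, hF]
  simp only [hpow, WithLp.ofLp_sum, WithLp.ofLp_smul, hw, Matrix.mulVec_sum, Matrix.mulVec_smul,
    Matrix.mulVec_mulVec, hVW, Matrix.one_mulVec]
  ext i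
  simp [EuclideanSpace.inner_single_left, Pi.single_apply, mul_comm]
end
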